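/- Let J ⊆ ℝ be a compact interval and let f_1, …, f_n : ℝ → ℝ be C^{1+ε} orientation-preserving bijections (each f_j' is positive, Hölder continuous with some exponent ε > 0, and satisfies f_j'(x) ≤ λ_max for some constant λ_max < 1) with f_j(J) ⊆ J for all j, let p̄ be a probability vector with p_j > 0, and let μ be a Borel probability measure with μ = ∑_j p_j (f_j)_*μ. If α > 0 is such that there exist α' > α and C > 0 with μ(B_ρ(x)) ≤ C ρ^{α'} for all x ∈ ℝ and ρ > 0, then there exist r > 0, θ > 0, and a piecewise constant function ψ : ℝ → ℝ vanishing outside the closed r-neighbourhood B_r(J) with θ ≤ ψ(x) ≤ θ^{-1} for all x ∈ B_r(J), such that for every x ∈ B_r(J) one has ∑_j p_j ((f_j^{-1})'(x))^{α} ψ(f_j^{-1}(x)) < ψ(x). -/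

import Mathlib

open MeasureTheory
open scoped ENNReal

/-! The idea is to use the Riesz potential `Ψ x = ∫ |x - y| ^ (-s) ∂μ y` with `α < s < α'` as a test
function. Frostman regularity makes it continuous, and by stationarity `Ψ x` averages
`∫ |x - f_j z| ^ (-s) ∂μ z` with weights `p_j`. If the maps were affine with ratios `v_j ≤ λ`, then
`v_j ^ (-α) * |u - z| ^ (-s) = v_j ^ (s - α) * |f_j u - f_j z| ^ (-s)`, so diffusion would contract
`Ψ` by the factor `λ ^ (s - α) < 1`. In general `log f_j'` varies over distance `t` by at most
`τ + C * t` with `τ` as small as we like; the term `τ` costs a factor close to `1`, while `C * t` is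
absorbed by screening the kernel, `t ^ (-s) * exp (-M * t)`, because
`M * |f_j u - f_j z| ≤ λ * M * |u - z|`. Finally, `Ψ` is replaced by a step function between `Ψ` and
`κ * Ψ`, where `κ > 1` is close to `1`. -/

open Filter Function Metric Real Set
open scoped NNReal Topology

section Frostman

variable {X : Type*} [PseudoMetricSpace X] [MeasurableSpace X] {μ : Measure X} {C d s : ℝ}

/-- Frostman regularity of exponent `d` with constant `C`; the Frostman dimension is the supremum of
the exponents for which some constant exists. -/
def IsFrostman (μ : Measure X) (C d : ℝ) : Prop :=
  ∀ x ρ, 0 < ρ → μ (closedBall x ρ) ≤ ENNReal.ofReal (C * ρ ^ d)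

theorem IsFrostman.ae_dist_pos (h : IsFrostman μ C d) (hd : 0 < d) (x : X) :
    ∀ᵐ y ∂μ, 0 < dist x y := by
  have bound_tendsto : Tendsto (fun ρ : ℝ => ENNReal.ofReal (C * ρ ^ d)) (𝓝[>] 0) (𝓝 0) := by
    have hcont : Continuous fun ρ : ℝ => ENNReal.ofReal (C * ρ ^ d) :=
      ENNReal.continuous_ofReal.comp (continuous_const.mul (continuous_rpow_const hd.le))
    simpa [zero_rpow hd.ne'] using (hcont.tendsto 0).mono_left nhdsWithin_le_nhds
  have measure_zero : μ (closedBall x 0) = 0 := by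
    refine le_antisymm (ge_of_tendsto bound_tendsto ?_) zero_le
    filter_upwards [self_mem_nhdsWithin] with ρ (hρ : 0 < ρ)
    exact (measure_mono (closedBall_subset_closedBall hρ.le)).trans (h x ρ hρ)
  rw [ae_iff]
  convert measure_zero using 2
  ext y
  simp [dist_comm x y]

variable [OpensMeasurableSpace X]

theorem IsFrostman.exists_lintegral_rpow_neg_dist_le [IsFiniteMeasure μ] (h : IsFrostman μ C d)
    (hs : 0 < s) (hsd : s < d) :
    ∃ K : ℝ≥0, ∀ x, ∫⁻ y, ENNReal.ofReal (dist x y ^ (-s)) ∂μ ≤ K := by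
  have tail_integrable : IntegrableOn (fun t : ℝ => C * t ^ (-(d / s))) (Ioi 1) := by
    have hds : 1 < d / s := (one_lt_div hs).2 hsd
    exact (integrableOn_Ioi_rpow_of_lt (by linarith) one_pos).const_mul C
  set L := ∫⁻ t in Ioi (1 : ℝ), ENNReal.ofReal (C * t ^ (-(d / s)))
  have hL : μ univ + L ≠ ⊤ := by
    have := tail_integrable.lintegral_lt_top
    finiteness
  have superlevel_subset : ∀ x : X, ∀ t : ℝ, 0 < t →
      {y | t ≤ dist x y ^ (-s)} ⊆ closedBall x (t ^ (-s⁻¹)) := by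
    intro x t ht y hy
    rw [mem_closedBall']
    rcases (dist_nonneg (x := x) (y := y)).eq_or_lt' with h0 | h0
    · rw [h0]; positivity
    · have := rpow_le_rpow_of_nonpos ht hy (z := -s⁻¹) (by simp [hs.le])
      rwa [← rpow_mul h0.le, neg_mul_neg, mul_inv_cancel₀ hs.ne', rpow_one] at this
  refine ⟨(μ univ + L).toNNReal, fun x => ?_⟩
  rw [ENNReal.coe_toNNReal hL, lintegral_eq_lintegral_meas_le μ
    (ae_of_all _ fun y => rpow_nonneg dist_nonneg _) (by fun_prop),
    ← Ioc_union_Ioi_eq_Ioi zero_le_one]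
  refine (lintegral_union_le _ _ _).trans (add_le_add ?_ ?_)
  · calc ∫⁻ t in Ioc (0 : ℝ) 1, μ {y | t ≤ dist x y ^ (-s)}
        ≤ ∫⁻ _ in Ioc (0 : ℝ) 1, μ univ := lintegral_mono fun t => measure_mono (subset_univ _)
      _ = μ univ := by simp
  · refine setLIntegral_mono' measurableSet_Ioi fun t (ht : 1 < t) => ?_
    have ht0 : 0 < t := one_pos.trans ht
    calc μ {y | t ≤ dist x y ^ (-s)}
        ≤ μ (closedBall x (t ^ (-s⁻¹))) := measure_mono (superlevel_subset x t ht0)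
      _ ≤ ENNReal.ofReal (C * (t ^ (-s⁻¹)) ^ d) := h x _ (by positivity)
      _ = ENNReal.ofReal (C * t ^ (-(d / s))) := by
          rw [← rpow_mul ht0.le, neg_mul, inv_mul_eq_div]

theorem IsFrostman.integrable_rpow_neg_dist [IsFiniteMeasure μ] (h : IsFrostman μ C d)
    (hs : 0 < s) (hsd : s < d) (x : X) : Integrable (fun y => dist x y ^ (-s)) μ := by
  obtain ⟨K, hK⟩ := h.exists_lintegral_rpow_neg_dist_le hs hsd
  refine ⟨Measurable.aestronglyMeasurable (by fun_prop), ?_⟩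
  rw [hasFiniteIntegral_iff_ofReal (ae_of_all _ fun y => rpow_nonneg dist_nonneg _)]
  exact (hK x).trans_lt ENNReal.coe_lt_top

theorem IsFrostman.exists_integral_rpow_neg_dist_le [IsFiniteMeasure μ] (h : IsFrostman μ C d)
    (hs : 0 < s) (hsd : s < d) : ∃ K : ℝ≥0, ∀ x, ∫ y, dist x y ^ (-s) ∂μ ≤ K := by
  obtain ⟨K, hK⟩ := h.exists_lintegral_rpow_neg_dist_le hs hsd
  refine ⟨K, fun x => ?_⟩
  rw [integral_eq_lintegral_of_nonneg_ae (ae_of_all _ fun y => rpow_nonneg dist_nonneg _)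
    (h.integrable_rpow_neg_dist hs hsd x).aestronglyMeasurable]
  exact ENNReal.toReal_le_of_le_ofReal K.2 (by simpa using hK x)

end Frostman

section RadialPotential

/-- A nonnegative kernel on `(0, ∞)` bounded by the Riesz kernel of exponent `s`. Nothing but
measurability is asked of its values elsewhere. -/
structure IsRieszDominated (k : ℝ → ℝ) (s : ℝ) : Prop where
  measurable : Measurable k
  continuousOn : ContinuousOn k (Ioi 0)
  nonneg : ∀ t, 0 < t → 0 ≤ k t
  le_rpow : ∀ t, 0 < t → k t ≤ t ^ (-s)

namespace IsRieszDominated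

variable {k : ℝ → ℝ} {s r δ : ℝ}

theorem le_rpow_of_le (hk : IsRieszDominated k s) (hs : 0 ≤ s) (hδ : 0 < δ) {t : ℝ} (ht : δ ≤ t) :
    k t ≤ δ ^ (-s) :=
  (hk.le_rpow t (hδ.trans_le ht)).trans (rpow_le_rpow_of_nonpos hδ ht (neg_nonpos.2 hs))

theorem comp_max (hk : IsRieszDominated k s) (hs : 0 ≤ s) (δ : ℝ) :
    IsRieszDominated (fun t => k (max t δ)) s where
  measurable := hk.measurable.comp (by fun_prop)
  continuousOn := hk.continuousOn.comp (by fun_prop) fun _ ht =>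
    mem_Ioi.2 (lt_max_of_lt_left ht)
  nonneg _ ht := hk.nonneg _ (lt_max_of_lt_left ht)
  le_rpow _ ht := hk.le_rpow_of_le hs ht (le_max_left _ _)

theorem abs_sub_comp_max_le (hk : IsRieszDominated k s) (hs : 0 ≤ s) (hsr : s ≤ r) (hδ : 0 ≤ δ)
    {t : ℝ} (ht : 0 < t) : |k t - k (max t δ)| ≤ δ ^ (r - s) * t ^ (-r) := by
  rcases le_total δ t with hδt | htδ
  · rw [max_eq_left hδt, sub_self, abs_zero]
    positivity
  · calc |k t - k (max t δ)| ≤ t ^ (-s) :=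
          abs_sub_le_of_nonneg_of_le (hk.nonneg t ht) (hk.le_rpow t ht)
            ((hk.comp_max hs δ).nonneg t ht) ((hk.comp_max hs δ).le_rpow t ht)
      _ = t ^ (r - s) * t ^ (-r) := by rw [← rpow_add ht]; congr 1; ring
      _ ≤ δ ^ (r - s) * t ^ (-r) := by gcongr

end IsRieszDominated

variable {X : Type*} [PseudoMetricSpace X] [MeasurableSpace X] {μ : Measure X} {C d s : ℝ}
  {k : ℝ → ℝ}

/-- The potential of the measure `μ` for a kernel `k` depending only on the distance. The value of
`k` at `0`, where Riesz kernels are singular, is irrelevant for Frostman regular measures. -/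
noncomputable def radialPotential (k : ℝ → ℝ) (μ : Measure X) (x : X) : ℝ :=
  ∫ y, k (dist x y) ∂μ

variable [OpensMeasurableSpace X] [IsFiniteMeasure μ]

theorem IsFrostman.integrable_kernel (h : IsFrostman μ C d) (hs : 0 < s) (hsd : s < d)
    (hk : IsRieszDominated k s) (x : X) : Integrable (fun y => k (dist x y)) μ := by
  refine (h.integrable_rpow_neg_dist hs hsd x).mono'
    (hk.measurable.comp (by fun_prop)).aestronglyMeasurable ?_
  filter_upwards [h.ae_dist_pos (hs.trans hsd) x] with y hy
  rw [norm_of_nonneg (hk.nonneg _ hy)]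
  exact hk.le_rpow _ hy

theorem IsFrostman.radialPotential_pos [NeZero μ] (h : IsFrostman μ C d) (hs : 0 < s) (hsd : s < d)
    (hk : IsRieszDominated k s) (hkpos : ∀ t, 0 < t → 0 < k t) (x : X) :
    0 < radialPotential k μ x := by
  have kernel_pos : ∀ᵐ y ∂μ, 0 < k (dist x y) :=
    (h.ae_dist_pos (hs.trans hsd) x).mono fun y hy => hkpos _ hy
  have support_eq : support (fun y => k (dist x y)) =ᵐ[μ] univ :=
    eventuallyEq_univ.2 (kernel_pos.mono fun y hy => hy.ne')
  refine (integral_pos_iff_support_of_nonneg_ae (kernel_pos.mono fun y hy => hy.le)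
    (h.integrable_kernel hs hsd hk x)).2 ?_
  rw [measure_congr support_eq]
  exact Measure.measure_univ_pos.2 (NeZero.ne μ)

theorem IsRieszDominated.continuous_radialPotential_comp_max (hk : IsRieszDominated k s)
    (hs : 0 ≤ s) {δ : ℝ} (hδ : 0 < δ) : Continuous (radialPotential (fun t => k (max t δ)) μ) := by
  have max_pos : ∀ t, 0 < max t δ := fun t => hδ.trans_le (le_max_right _ _)
  refine continuous_of_dominated (bound := fun _ => δ ^ (-s))
    (fun x => (hk.measurable.comp (by fun_prop)).aestronglyMeasurable)
    (fun x => ae_of_all _ fun y => ?_) (integrable_const _) (ae_of_all _ fun y => ?_)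
  · rw [norm_of_nonneg (hk.nonneg _ (max_pos _))]
    exact hk.le_rpow_of_le hs hδ (le_max_right _ _)
  · exact hk.continuousOn.comp_continuous (by fun_prop) fun x => max_pos _

theorem IsFrostman.exists_abs_radialPotential_sub_comp_max_le (h : IsFrostman μ C d) (hs : 0 < s)
    (hk : IsRieszDominated k s) {r : ℝ} (hsr : s ≤ r) (hrd : r < d) :
    ∃ K : ℝ≥0, ∀ δ, 0 ≤ δ → ∀ x,
      |radialPotential k μ x - radialPotential (fun t => k (max t δ)) μ x| ≤ δ ^ (r - s) * K := by
  obtain ⟨K, hK⟩ := h.exists_integral_rpow_neg_dist_le (hs.trans_le hsr) hrd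
  refine ⟨K, fun δ hδ x => ?_⟩
  have integrable := fun {k} (hk : IsRieszDominated k s) =>
    h.integrable_kernel hs (hsr.trans_lt hrd) hk x
  rw [radialPotential, radialPotential,
    ← integral_sub (integrable hk) (integrable (hk.comp_max hs.le δ))]
  calc |∫ y, k (dist x y) - k (max (dist x y) δ) ∂μ|
      ≤ ∫ y, δ ^ (r - s) * dist x y ^ (-r) ∂μ := by
        rw [← Real.norm_eq_abs]
        refine norm_integral_le_of_norm_le
          ((h.integrable_rpow_neg_dist (hs.trans_le hsr) hrd x).const_mul _) ?_
        filter_upwards [h.ae_dist_pos ((hs.trans_le hsr).trans hrd) x] with y hy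
        exact hk.abs_sub_comp_max_le hs.le hsr hδ hy
    _ ≤ δ ^ (r - s) * K := by
        rw [integral_const_mul]
        gcongr
        exact hK x

theorem IsFrostman.continuous_radialPotential (h : IsFrostman μ C d) (hs : 0 < s) (hsd : s < d)
    (hk : IsRieszDominated k s) : Continuous (radialPotential k μ) := by
  obtain ⟨r, hsr, hrd⟩ := exists_between hsd
  obtain ⟨K, hK⟩ := h.exists_abs_radialPotential_sub_comp_max_le hs hk hsr.le hrd
  have error_tendsto : Tendsto (fun δ : ℝ => δ ^ (r - s) * K) (𝓝[>] 0) (𝓝 0) := by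
    have := ((continuous_rpow_const (sub_pos.2 hsr).le).mul_const (K : ℝ)).tendsto 0
    simpa [zero_rpow (sub_pos.2 hsr).ne'] using this.mono_left nhdsWithin_le_nhds
  refine continuous_of_uniform_approx_of_continuous fun u hu => ?_
  obtain ⟨η, hη, hηu⟩ := mem_uniformity_dist.1 hu
  obtain ⟨δ, hδη, hδ : 0 < δ⟩ :=
    ((error_tendsto.eventually_lt_const hη).and self_mem_nhdsWithin).exists
  exact ⟨_, hk.continuous_radialPotential_comp_max hs.le hδ,
    fun x => hηu ((hK δ hδ.le x).trans_lt hδη)⟩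

end RadialPotential

section Stationary

variable {ι X : Type*} [Fintype ι] [MeasurableSpace X] {f : ι → X → X} {p : ι → ℝ} {μ : Measure X}

/-- Stationarity of `μ` under the random iteration applying `f j` with probability `p j`. -/
def IsStationaryMeasure (f : ι → X → X) (p : ι → ℝ) (μ : Measure X) : Prop :=
  μ = ∑ j, ENNReal.ofReal (p j) • μ.map (f j)

namespace IsStationaryMeasure

theorem nonempty [NeZero μ] (h : IsStationaryMeasure f p μ) : Nonempty ι := by
  by_contra hι
  rw [not_nonempty_iff] at hι
  exact NeZero.ne μ (by simpa [IsStationaryMeasure] using h)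

theorem measure_eq_sum (h : IsStationaryMeasure f p μ) (hf : ∀ j, Measurable (f j)) {s : Set X}
    (hs : MeasurableSet s) : μ s = ∑ j, ENNReal.ofReal (p j) * μ (f j ⁻¹' s) := by
  conv_lhs => rw [h]
  simp only [Measure.finsetSum_apply, Measure.smul_apply, smul_eq_mul, Measure.map_apply (hf _) hs]

theorem sum_weights [IsProbabilityMeasure μ] (h : IsStationaryMeasure f p μ)
    (hf : ∀ j, Measurable (f j)) : ∑ j, ENNReal.ofReal (p j) = 1 := by
  simpa using (h.measure_eq_sum hf MeasurableSet.univ).symm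

theorem measure_le_of_preimage_subset [IsProbabilityMeasure μ] (h : IsStationaryMeasure f p μ)
    (hf : ∀ j, Measurable (f j)) {s t : Set X} (hs : MeasurableSet s) (hst : ∀ j, f j ⁻¹' s ⊆ t) :
    μ s ≤ μ t :=
  calc μ s = ∑ j, ENNReal.ofReal (p j) * μ (f j ⁻¹' s) := h.measure_eq_sum hf hs
    _ ≤ ∑ j, ENNReal.ofReal (p j) * μ t := by gcongr with j; exact hst j
    _ = μ t := by rw [← Finset.sum_mul, h.sum_weights hf, one_mul]

theorem integrable_map {E : Type*} [NormedAddCommGroup E] (h : IsStationaryMeasure f p μ)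
    (hp : ∀ j, 0 < p j) {g : X → E} (hg : Integrable g μ) (j : ι) :
    Integrable g (μ.map (f j)) := by
  rw [h, integrable_finsetSum_measure] at hg
  exact (integrable_smul_measure (by simpa using hp j) ENNReal.ofReal_ne_top).1
    (hg j (Finset.mem_univ j))

theorem integral_eq_sum {E : Type*} [NormedAddCommGroup E] [NormedSpace ℝ E]
    (h : IsStationaryMeasure f p μ) (hf : ∀ j, Measurable (f j)) (hp : ∀ j, 0 < p j) {g : X → E}
    (hg : Integrable g μ) : ∫ x, g x ∂μ = ∑ j, p j • ∫ x, g (f j x) ∂μ := by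
  conv_lhs => rw [h]
  rw [integral_finsetSum_measure fun j _ =>
    (h.integrable_map hp hg j).smul_measure ENNReal.ofReal_ne_top]
  refine Finset.sum_congr rfl fun j _ => ?_
  rw [integral_smul_measure, ENNReal.toReal_ofReal (hp j).le,
    integral_map (hf j).aemeasurable (h.integrable_map hp hg j).aestronglyMeasurable]

theorem ae_nonpos_of_contracted [IsProbabilityMeasure μ] (h : IsStationaryMeasure f p μ)
    (hf : ∀ j, Measurable (f j)) {g : X → ℝ} (hg : Measurable g) {lam : ℝ} (hlam0 : 0 ≤ lam)
    (hlam1 : lam < 1) (hgf : ∀ j x, g (f j x) ≤ lam * g x) : ∀ᵐ x ∂μ, g x ≤ 0 := by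
  -- Iterating the one-step comparison, the mass above `t` escapes as `lam ^ k * g` tends to `0`.
  have measure_lt_le : ∀ t : ℝ, ∀ k : ℕ, μ {x | t < g x} ≤ μ {x | t < lam ^ k * g x} := by
    intro t k
    induction k with
    | zero => simp
    | succ k ih =>
      refine ih.trans (h.measure_le_of_preimage_subset hf
        (measurableSet_lt measurable_const (hg.const_mul _)) fun j x hx => ?_)
      calc t < lam ^ k * g (f j x) := hx
        _ ≤ lam ^ k * (lam * g x) := by gcongr; exact hgf j x
        _ = lam ^ (k + 1) * g x := by ring
  have pow_mul_tendsto : TendstoInMeasure μ (fun (k : ℕ) x => lam ^ k * g x) atTop 0 :=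
    tendstoInMeasure_of_tendsto_ae (fun k => (hg.const_mul _).aestronglyMeasurable) <|
      ae_of_all _ fun x => by
        simpa using (tendsto_pow_atTop_nhds_zero_of_lt_one hlam0 hlam1).mul_const (g x)
  have measure_zero : ∀ t : ℝ, 0 < t → μ {x | t < g x} = 0 := by
    intro t ht
    refine le_antisymm (ge_of_tendsto' (tendstoInMeasure_iff_norm.1 pow_mul_tendsto t ht)
      fun k => (measure_lt_le t k).trans (measure_mono fun x hx => ?_)) zero_le
    rw [mem_ofPred_eq, Pi.zero_apply, sub_zero]
    exact (le_of_lt hx).trans (le_abs_self _)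
  have ae_le_inv : ∀ᵐ x ∂μ, ∀ k : ℕ, g x ≤ 1 / ((k : ℝ) + 1) :=
    ae_all_iff.2 fun k => by simpa [ae_iff] using measure_zero _ Nat.one_div_pos_of_nat
  exact ae_le_inv.mono fun x hx => ge_of_tendsto' tendsto_one_div_add_atTop_nhds_zero_nat hx

end IsStationaryMeasure

theorem infDist_le_mul_infDist_of_mapsTo {Y : Type*} [PseudoMetricSpace Y] {g : Y → Y} {K : ℝ≥0}
    {J : Set Y} (hg : LipschitzWith K g) (hJ : J.Nonempty) (hgJ : MapsTo g J J) (x : Y) :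
    infDist (g x) J ≤ K * infDist x J := by
  have : Nonempty J := hJ.to_subtype
  rw [infDist_eq_iInf (s := J) (x := x), Real.mul_iInf_of_nonneg K.coe_nonneg]
  exact le_ciInf fun y => (infDist_le_dist_of_mem (hgJ y.2)).trans (hg.dist_le_mul x y)

theorem IsStationaryMeasure.ae_mem_of_lipschitzWith {Y : Type*} [PseudoMetricSpace Y]
    [MeasurableSpace Y] [BorelSpace Y] {f : ι → Y → Y} {μ : Measure Y} [IsProbabilityMeasure μ]
    (h : IsStationaryMeasure f p μ) {K : ℝ≥0} (hK : K < 1) (hf : ∀ j, LipschitzWith K (f j))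
    {J : Set Y} (hJc : IsClosed J) (hJ : J.Nonempty) (hfJ : ∀ j, MapsTo (f j) J J) :
    ∀ᵐ x ∂μ, x ∈ J := by
  have infDist_nonpos := h.ae_nonpos_of_contracted (fun j => (hf j).continuous.measurable)
    (continuous_infDist_pt J).measurable K.2 hK
    fun j x => infDist_le_mul_infDist_of_mapsTo (hf j) hJ (hfJ j) x
  exact infDist_nonpos.mono fun x hx =>
    (hJc.mem_iff_infDist_zero hJ).2 (le_antisymm hx infDist_nonneg)

end Stationary

section IncreasingContraction

/-- A differentiable increasing map `f : ℝ → ℝ` with derivative `f'`, contracting by a factor of at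
most `lam`. -/
structure IsIncreasingContraction (f f' : ℝ → ℝ) (lam : ℝ) : Prop where
  hasDerivAt : ∀ x, HasDerivAt f (f' x) x
  deriv_pos : ∀ x, 0 < f' x
  deriv_le : ∀ x, f' x ≤ lam

namespace IsIncreasingContraction

variable {f f' : ℝ → ℝ} {lam : ℝ}

theorem ratio_pos (h : IsIncreasingContraction f f' lam) : 0 < lam :=
  (h.deriv_pos 0).trans_le (h.deriv_le 0)

theorem lipschitzWith (h : IsIncreasingContraction f f' lam) : LipschitzWith lam.toNNReal f := by
  refine lipschitzWith_of_nnnorm_deriv_le (fun x => (h.hasDerivAt x).differentiableAt) fun x => ?_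
  rw [(h.hasDerivAt x).deriv, ← NNReal.coe_le_coe, coe_nnnorm, norm_of_nonneg (h.deriv_pos x).le,
    coe_toNNReal _ h.ratio_pos.le]
  exact h.deriv_le x

theorem deriv_invFun (h : IsIncreasingContraction f f' lam) (hf : Surjective f) (x : ℝ) :
    deriv (invFun f) x = (f' (invFun f x))⁻¹ := by
  have right_inverse : RightInverse (invFun f) f := rightInverse_invFun hf
  have strict_mono : StrictMono f := strictMono_of_hasDerivAt_pos h.hasDerivAt h.deriv_pos
  have continuous_invFun : Continuous (invFun f) :=
    (strict_mono.orderIsoOfRightInverse f _ right_inverse).symm.continuous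
  exact (HasDerivAt.of_local_left_inverse continuous_invFun.continuousAt (h.hasDerivAt _)
    (h.deriv_pos _).ne' (Eventually.of_forall right_inverse)).deriv

theorem exists_dist_image_eq_mul_dist (h : IsIncreasingContraction f f' lam) (u z : ℝ) :
    ∃ ξ ∈ uIcc u z, dist (f u) (f z) = f' ξ * dist u z := by
  obtain ⟨ξ, hξ, hfξ⟩ := domain_mvt
    (fun x _ => (h.hasDerivAt x).hasFDerivAt.hasFDerivWithinAt) convex_univ (mem_univ z)
    (mem_univ u)
  rw [segment_symm, segment_eq_uIcc] at hξ
  refine ⟨ξ, hξ, ?_⟩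
  rw [Real.dist_eq, hfξ, ContinuousLinearMap.toSpanSingleton_apply, smul_eq_mul, abs_mul,
    abs_of_pos (h.deriv_pos ξ), mul_comm, Real.dist_eq]

end IsIncreasingContraction

theorem exists_dist_le_add_mul_dist {X Y : Type*} [PseudoMetricSpace X] [PseudoMetricSpace Y]
    {g : X → Y} {K : Set X} (hK : IsCompact K) (hg : ContinuousOn g K) {τ : ℝ} (hτ : 0 < τ) :
    ∃ C, 0 ≤ C ∧ ∀ x ∈ K, ∀ y ∈ K, dist (g x) (g y) ≤ τ + C * dist x y := by
  obtain ⟨δ, hδ, hδτ⟩ :=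
    uniformContinuousOn_iff.1 (hK.uniformContinuousOn_of_continuous hg) τ hτ
  refine ⟨diam (g '' K) / δ, by positivity, fun x hx y hy => ?_⟩
  rcases lt_or_ge (dist x y) δ with hxy | hxy
  · exact (hδτ x hx y hy hxy).le.trans (le_add_of_nonneg_right (by positivity))
  · calc dist (g x) (g y) ≤ diam (g '' K) :=
          dist_le_diam_of_mem (hK.image_of_continuousOn hg).isBounded (mem_image_of_mem g hx)
            (mem_image_of_mem g hy)
      _ = diam (g '' K) / δ * δ := (div_mul_cancel₀ _ hδ.ne').symm
      _ ≤ τ + diam (g '' K) / δ * dist x y :=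
          (mul_le_mul_of_nonneg_left hxy (by positivity)).trans (le_add_of_nonneg_left hτ.le)

end IncreasingContraction

section ScreenedKernel

/-- The Riesz kernel of exponent `s`, screened exponentially at rate `M`, as in the Yukawa
potential. -/
noncomputable def screenedRieszKernel (s M t : ℝ) : ℝ :=
  t ^ (-s) * exp (-(M * t))

variable {α s M τ C lam t : ℝ}

theorem screenedRieszKernel_pos (s M : ℝ) (ht : 0 < t) : 0 < screenedRieszKernel s M t :=
  mul_pos (rpow_pos_of_pos ht _) (exp_pos _)

theorem isRieszDominated_screenedRieszKernel (s : ℝ) (hM : 0 ≤ M) :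
    IsRieszDominated (screenedRieszKernel s M) s where
  measurable := by unfold screenedRieszKernel; fun_prop
  continuousOn := (continuousOn_id.rpow_const fun t ht => Or.inl (ne_of_gt ht)).mul (by fun_prop)
  nonneg t ht := (screenedRieszKernel_pos s M ht).le
  le_rpow t ht := mul_le_of_le_one_right (rpow_nonneg ht.le _)
    (exp_le_one_iff.2 (neg_nonpos.2 (mul_nonneg hM ht.le)))

theorem inv_rpow_mul_screenedRieszKernel_le {v w : ℝ} (hαs : α ≤ s) (hM : 0 ≤ M)
    (hCM : C ≤ M * (1 - lam)) (hv : 0 < v) (hw : 0 < w) (hwlam : w ≤ lam) (ht : 0 < t)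
    (hwv : α * log w - α * log v ≤ τ + C * t) :
    v⁻¹ ^ α * screenedRieszKernel s M t
      ≤ exp τ * lam ^ (s - α) * screenedRieszKernel s M (w * t) := by
  have ratio_gain : (s - α) * log w ≤ (s - α) * log lam :=
    mul_le_mul_of_nonneg_left (log_le_log hw hwlam) (sub_nonneg.2 hαs)
  have screening_gain : C * t + M * (w * t) ≤ M * t := by
    have := mul_le_mul_of_nonneg_right hCM ht.le
    have := mul_le_mul_of_nonneg_left (mul_le_mul_of_nonneg_right hwlam ht.le) hM
    linarith
  simp only [screenedRieszKernel, rpow_def_of_pos, inv_pos.2 hv, hw.trans_le hwlam, ht,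
    mul_pos hw ht, log_inv, log_mul hw.ne' ht.ne', ← exp_add, exp_le_exp]
  linarith

theorem IsIncreasingContraction.inv_rpow_mul_screenedRieszKernel_dist_le {f f' : ℝ → ℝ}
    {I : Set ℝ} (h : IsIncreasingContraction f f' lam) (hI : I.OrdConnected) (hαs : α ≤ s)
    (hM : 0 ≤ M) (hC : 0 ≤ C) (hCM : C ≤ M * (1 - lam))
    (hlog : ∀ x ∈ I, ∀ y ∈ I, dist (α * log (f' x)) (α * log (f' y)) ≤ τ + C * dist x y)
    {u z : ℝ} (hu : u ∈ I) (hz : z ∈ I) (huz : 0 < dist u z) :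
    (f' u)⁻¹ ^ α * screenedRieszKernel s M (dist u z)
      ≤ exp τ * lam ^ (s - α) * screenedRieszKernel s M (dist (f u) (f z)) := by
  obtain ⟨ξ, hξ, hfξ⟩ := h.exists_dist_image_eq_mul_dist u z
  rw [hfξ]
  refine inv_rpow_mul_screenedRieszKernel_le hαs hM hCM (h.deriv_pos u) (h.deriv_pos ξ)
    (h.deriv_le ξ) huz ?_
  calc α * log (f' ξ) - α * log (f' u) ≤ dist (α * log (f' ξ)) (α * log (f' u)) := le_abs_self _
    _ ≤ τ + C * dist ξ u := hlog ξ (hI.uIcc_subset hu hz hξ) u hu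
    _ ≤ τ + C * dist u z := by
        gcongr
        simpa only [Real.dist_eq, abs_sub_comm z u] using abs_sub_left_of_mem_uIcc hξ

end ScreenedKernel

section Diffusion

variable {ι : Type*} [Fintype ι] {f f' : ι → ℝ → ℝ} {p : ι → ℝ} {μ : Measure ℝ} {I : Set ℝ}
  {α lam s M τ C C' d : ℝ}

/-- The asymmetric diffusion operator `D^{(1)}_{α,T}` of a scheme `T` of increasing bijections. The
inverse branches are given by `Function.invFun`, and their derivatives need no absolute value. -/
noncomputable def asymmetricDiffusion (f : ι → ℝ → ℝ) (p : ι → ℝ) (α : ℝ) (ψ : ℝ → ℝ) (x : ℝ) : ℝ :=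
  ∑ j, p j * (deriv (invFun (f j)) x) ^ α * ψ (invFun (f j) x)

theorem asymmetricDiffusion_le_mul {ψ φ : ℝ → ℝ} {κ x : ℝ} (hp : ∀ j, 0 ≤ p j)
    (hderiv : ∀ j, 0 ≤ deriv (invFun (f j)) x) (hψ : ∀ y, ψ y ≤ κ * φ y) :
    asymmetricDiffusion f p α ψ x ≤ κ * asymmetricDiffusion f p α φ x := by
  rw [asymmetricDiffusion, asymmetricDiffusion, Finset.mul_sum]
  refine Finset.sum_le_sum fun j _ => ?_
  rw [mul_left_comm]
  exact mul_le_mul_of_nonneg_left (hψ _) (mul_nonneg (hp j) (rpow_nonneg (hderiv j) α))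

theorem inv_rpow_mul_radialPotential_le {g g' : ℝ → ℝ} (hg : IsIncreasingContraction g g' lam)
    (hI : I.OrdConnected) (hμI : ∀ᵐ z ∂μ, z ∈ I) (hαs : α ≤ s) (hM : 0 ≤ M) (hC : 0 ≤ C)
    (hCM : C ≤ M * (1 - lam))
    (hlog : ∀ x ∈ I, ∀ y ∈ I, dist (α * log (g' x)) (α * log (g' y)) ≤ τ + C * dist x y)
    {u : ℝ} (hu : u ∈ I) (hne : ∀ᵐ z ∂μ, 0 < dist u z)
    (hint : Integrable (fun z => screenedRieszKernel s M (dist u z)) μ)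
    (hint_image : Integrable (fun z => screenedRieszKernel s M (dist (g u) (g z))) μ) :
    (g' u)⁻¹ ^ α * radialPotential (screenedRieszKernel s M) μ u
      ≤ exp τ * lam ^ (s - α) * ∫ z, screenedRieszKernel s M (dist (g u) (g z)) ∂μ := by
  rw [radialPotential, ← integral_const_mul, ← integral_const_mul]
  refine integral_mono_ae (hint.const_mul _) (hint_image.const_mul _) ?_
  filter_upwards [hμI, hne] with z hz huz
  exact hg.inv_rpow_mul_screenedRieszKernel_dist_le hI hαs hM hC hCM hlog hu hz huz

theorem asymmetricDiffusion_indicator_radialPotential_le [IsFiniteMeasure μ]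
    (hμ : IsStationaryMeasure f p μ) (hF : IsFrostman μ C' d)
    (hf : ∀ j, IsIncreasingContraction (f j) (f' j) lam) (hsurj : ∀ j, Surjective (f j))
    (hp : ∀ j, 0 < p j) (hI : I.OrdConnected) (hμI : ∀ᵐ z ∂μ, z ∈ I)
    (hs : 0 < s) (hsd : s < d) (hαs : α ≤ s) (hM : 0 ≤ M) (hC : 0 ≤ C) (hCM : C ≤ M * (1 - lam))
    (hlog : ∀ j, ∀ x ∈ I, ∀ y ∈ I,
      dist (α * log (f' j x)) (α * log (f' j y)) ≤ τ + C * dist x y) (x : ℝ) :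
    asymmetricDiffusion f p α (I.indicator (radialPotential (screenedRieszKernel s M) μ)) x
      ≤ exp τ * lam ^ (s - α) * radialPotential (screenedRieszKernel s M) μ x := by
  have kernel_integrable :=
    hF.integrable_kernel hs hsd (isRieszDominated_screenedRieszKernel s hM)
  have measurable_f : ∀ j, Measurable (f j) := fun j => (hf j).lipschitzWith.continuous.measurable
  have image_integrable : ∀ j, Integrable (fun z => screenedRieszKernel s M (dist x (f j z))) μ :=
    fun j => (hμ.integrable_map hp (kernel_integrable x) j).comp_measurable (measurable_f j)
  rw [asymmetricDiffusion, radialPotential,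
    hμ.integral_eq_sum measurable_f hp (kernel_integrable x), Finset.mul_sum]
  refine Finset.sum_le_sum fun j _ => ?_
  rw [(hf j).deriv_invFun (hsurj j), mul_assoc, smul_eq_mul, mul_left_comm _ (p j)]
  refine mul_le_mul_of_nonneg_left ?_ (hp j).le
  have f_invFun : f j (invFun (f j) x) = x := rightInverse_invFun (hsurj j) x
  by_cases hu : invFun (f j) x ∈ I
  · rw [indicator_of_mem hu]
    simpa only [f_invFun] using
      inv_rpow_mul_radialPotential_le (hf j) hI hμI hαs hM hC hCM (hlog j) hu
        (hF.ae_dist_pos (hs.trans hsd) _) (kernel_integrable _)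
        (by simpa only [f_invFun] using image_integrable j)
  · rw [indicator_of_notMem hu, mul_zero]
    have integral_nonneg : 0 ≤ ∫ z, screenedRieszKernel s M (dist x (f j z)) ∂μ :=
      integral_nonneg fun z => mul_nonneg (rpow_nonneg dist_nonneg _) (exp_pos _).le
    have := (hf j).ratio_pos
    positivity

theorem exists_continuous_pos_asymmetricDiffusion_indicator_le [IsFiniteMeasure μ] [NeZero μ]
    (hμ : IsStationaryMeasure f p μ) (hF : IsFrostman μ C' d)
    (hf : ∀ j, IsIncreasingContraction (f j) (f' j) lam) (hlam : lam < 1)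
    (hf' : ∀ j, ContinuousOn (f' j) I) (hsurj : ∀ j, Surjective (f j)) (hp : ∀ j, 0 < p j)
    (hI : I.OrdConnected) (hIc : IsCompact I) (hμI : ∀ᵐ z ∂μ, z ∈ I) (hd : 0 < d) (hαd : α < d) :
    ∃ Ψ : ℝ → ℝ, Continuous Ψ ∧ (∀ x, 0 < Ψ x) ∧ ∃ q, 0 < q ∧ q < 1 ∧
      ∀ x, asymmetricDiffusion f p α (I.indicator Ψ) x ≤ q * Ψ x := by
  obtain ⟨j₀⟩ := hμ.nonempty
  have lam_pos : 0 < lam := (hf j₀).ratio_pos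
  obtain ⟨s, hmax, hsd⟩ := exists_between (max_lt hd hαd)
  obtain ⟨hs, hαs⟩ := max_lt_iff.1 hmax
  obtain ⟨τ, hτ, hτlam⟩ : ∃ τ, 0 < τ ∧ τ < (s - α) * -log lam :=
    exists_between (mul_pos (sub_pos.2 hαs) (neg_pos.2 (log_neg lam_pos hlam)))
  -- The logarithms form one map into `ι → ℝ`, so a single constant serves all branches.
  have log_continuousOn : ContinuousOn (fun x j => α * log (f' j x)) I :=
    continuousOn_pi.2 fun j =>
      ((hf' j).log fun x _ => ((hf j).deriv_pos x).ne').const_mul α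
  obtain ⟨C, hC, hlog⟩ := exists_dist_le_add_mul_dist hIc log_continuousOn hτ
  have hM : 0 ≤ C / (1 - lam) := div_nonneg hC (sub_pos.2 hlam).le
  have dominated := isRieszDominated_screenedRieszKernel s hM
  refine ⟨radialPotential (screenedRieszKernel s (C / (1 - lam))) μ,
    hF.continuous_radialPotential hs hsd dominated,
    hF.radialPotential_pos hs hsd dominated fun t => screenedRieszKernel_pos s _,
    exp τ * lam ^ (s - α), by positivity, ?_,
    asymmetricDiffusion_indicator_radialPotential_le hμ hF hf hsurj hp hI hμI hs hsd hαs.le hM hC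
      (div_mul_cancel₀ C (sub_pos.2 hlam).ne').ge
      fun j x hx y hy => (dist_le_pi_dist _ _ j).trans (hlog x hx y hy)⟩
  rw [rpow_def_of_pos lam_pos, ← exp_add, exp_lt_one_iff]
  linarith

theorem asymmetricDiffusion_lt_of_between {Ψ ψ : ℝ → ℝ} {κ q x : ℝ}
    (hf : ∀ j, IsIncreasingContraction (f j) (f' j) lam) (hsurj : ∀ j, Surjective (f j))
    (hp : ∀ j, 0 ≤ p j) (hκ : 0 ≤ κ) (hκq : κ * q < 1) (hψ0 : ∀ y ∉ I, ψ y = 0)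
    (hψ : ∀ y ∈ I, Ψ y ≤ ψ y ∧ ψ y ≤ κ * Ψ y) (hx : x ∈ I) (hΨx : 0 < Ψ x)
    (hq : asymmetricDiffusion f p α (I.indicator Ψ) x ≤ q * Ψ x) :
    asymmetricDiffusion f p α ψ x < ψ x := by
  have deriv_nonneg : ∀ j, 0 ≤ deriv (invFun (f j)) x := fun j => by
    rw [(hf j).deriv_invFun (hsurj j)]
    exact (inv_pos.2 ((hf j).deriv_pos _)).le
  have ψ_le : ∀ y, ψ y ≤ κ * I.indicator Ψ y := fun y => by
    by_cases hy : y ∈ I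
    · rw [indicator_of_mem hy]
      exact (hψ y hy).2
    · rw [indicator_of_notMem hy, mul_zero, hψ0 y hy]
  calc asymmetricDiffusion f p α ψ x
      ≤ κ * asymmetricDiffusion f p α (I.indicator Ψ) x :=
        asymmetricDiffusion_le_mul hp deriv_nonneg ψ_le
    _ ≤ κ * (q * Ψ x) := mul_le_mul_of_nonneg_left hq hκ
    _ = κ * q * Ψ x := (mul_assoc _ _ _).symm
    _ < Ψ x := mul_lt_of_lt_one_left hΨx hκq
    _ ≤ ψ x := (hψ x hx).1

end Diffusion

section StepFunctions

/-- Real step functions: finite linear combinations of indicators of intervals, where intervals may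
be degenerate, unbounded or empty. -/
def IsPiecewiseConstant (ψ : ℝ → ℝ) : Prop :=
  ∃ (m : ℕ) (coef : Fin m → ℝ) (I : Fin m → Set ℝ),
    (∀ i, (I i).OrdConnected) ∧ ψ = fun x => ∑ i, (I i).indicator (fun _ => coef i) x

variable {I : Set ℝ} {g : ℝ → ℝ}

theorem isPiecewiseConstant_indicator_comp (hI : I.OrdConnected) {N : ℝ → ℕ} (hN : Monotone N)
    {m : ℕ} (hNm : ∀ x ∈ I, N x < m) (c : ℕ → ℝ) :
    IsPiecewiseConstant (I.indicator (c ∘ N)) := by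
  refine ⟨m, fun i => c i, fun i => I ∩ N ⁻¹' {(i : ℕ)},
    fun i => hI.inter (ordConnected_singleton.preimage_mono hN), funext fun x => ?_⟩
  by_cases hx : x ∈ I
  · rw [indicator_of_mem hx, Finset.sum_eq_single_of_mem ⟨N x, hNm x hx⟩ (Finset.mem_univ _)]
    · simp [hx]
    · intro i _ hi
      exact indicator_of_notMem (fun h => hi (Fin.ext h.2.symm)) _
  · simp [hx]

theorem exists_isPiecewiseConstant_abs_sub_le {A B : ℝ}
    (hg : ContinuousOn g (Icc A B)) {η : ℝ} (hη : 0 < η) :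
    ∃ ψ, IsPiecewiseConstant ψ ∧ (∀ x ∉ Icc A B, ψ x = 0) ∧
      ∀ x ∈ Icc A B, |ψ x - g x| ≤ η := by
  obtain ⟨w, hw, hgw⟩ := uniformContinuousOn_iff_le.1
    (isCompact_Icc.uniformContinuousOn_of_continuous hg) η hη
  set cell : ℝ → ℕ := fun x => ⌊(x - A) / w⌋₊
  have cell_mono : Monotone cell := fun x y hxy => Nat.floor_mono (by gcongr)
  refine ⟨(Icc A B).indicator ((fun i : ℕ => g (A + i * w)) ∘ cell),
    isPiecewiseConstant_indicator_comp ordConnected_Icc cell_mono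
      (fun x hx => Nat.lt_succ_of_le (cell_mono hx.2)) _,
    fun x hx => indicator_of_notMem hx _, fun x hx => ?_⟩
  have node_le : (cell x : ℝ) * w ≤ x - A :=
    (le_div_iff₀ hw).1 (Nat.floor_le (div_nonneg (sub_nonneg.2 hx.1) hw.le))
  have lt_next_node : x - A < (cell x + 1) * w := (div_lt_iff₀ hw).1 (Nat.lt_floor_add_one _)
  have node_nonneg : 0 ≤ (cell x : ℝ) * w := by positivity
  rw [indicator_of_mem hx]
  refine hgw _ ⟨by linarith, by linarith [hx.2]⟩ x hx ?_
  rw [Real.dist_eq, abs_le]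
  constructor <;> linarith

theorem exists_isPiecewiseConstant_between {A B κ : ℝ} (hg : ContinuousOn g (Icc A B))
    (hpos : ∀ x ∈ Icc A B, 0 < g x) (hκ : 1 < κ) :
    ∃ ψ, IsPiecewiseConstant ψ ∧ (∀ x ∉ Icc A B, ψ x = 0) ∧
      ∀ x ∈ Icc A B, g x ≤ ψ x ∧ ψ x ≤ κ * g x := by
  obtain ⟨m, hm, hmg⟩ := isCompact_Icc.exists_forall_le' hg hpos
  have radius_pos : 0 < (κ - 1) / 2 := half_pos (sub_pos.2 hκ)
  -- `(κ + 1) / 2 * g` is midway between the two bounds, at distance `(κ - 1) / 2 * g` from each.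
  obtain ⟨ψ, hψ, hψ0, hψg⟩ :=
    exists_isPiecewiseConstant_abs_sub_le (hg.const_mul ((κ + 1) / 2)) (mul_pos radius_pos hm)
  refine ⟨ψ, hψ, hψ0, fun x hx => ?_⟩
  have := abs_le.1 (hψg x hx)
  have error_le : (κ - 1) / 2 * m ≤ (κ - 1) / 2 * g x :=
    mul_le_mul_of_nonneg_left (hmg x hx) radius_pos.le
  constructor <;> linarith

end StepFunctions

theorem exists_pos_le_and_le_inv {X : Type*} [TopologicalSpace X] {K : Set X} (hK : IsCompact K)
    {g h : X → ℝ} (hg : ContinuousOn g K) (hg0 : ∀ x ∈ K, 0 < g x) (hh : ContinuousOn h K)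
    (hh0 : ∀ x ∈ K, 0 < h x) : ∃ θ, 0 < θ ∧ ∀ x ∈ K, θ ≤ g x ∧ h x ≤ θ⁻¹ := by
  obtain ⟨θ, hθ, hθle⟩ := hK.exists_forall_le' (hg.inf (hh.inv₀ fun x hx => (hh0 x hx).ne'))
    fun x hx => lt_inf_iff.2 ⟨hg0 x hx, inv_pos.2 (hh0 x hx)⟩
  exact ⟨θ, hθ, fun x hx => ⟨(le_inf_iff.1 (hθle x hx)).1,
    le_inv_of_le_inv₀ hθ (le_inf_iff.1 (hθle x hx)).2⟩⟩

theorem cthickening_Icc {a b r : ℝ} (hab : a ≤ b) (hr : 0 ≤ r) :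
    cthickening r (Icc a b) = Icc (a - r) (b + r) := by
  rw [Real.Icc_eq_closedBall, cthickening_closedBall hr (by linarith), Real.closedBall_eq_Icc]
  congr 1 <;> ring

theorem continuous_of_abs_sub_le_rpow {g : ℝ → ℝ} {C ε : ℝ} (hε : 0 < ε)
    (hg : ∀ x y, |g x - g y| ≤ C * |x - y| ^ ε) : Continuous g := by
  refine continuous_iff_continuousAt.2 fun y => tendsto_iff_dist_tendsto_zero.2 ?_
  have bound_continuous : Continuous fun x => C * |x - y| ^ ε :=
    ((continuous_rpow_const hε.le).comp (by fun_prop)).const_mul C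
  exact squeeze_zero (fun x => dist_nonneg) (fun x => hg x y)
    (by simpa [zero_rpow hε.ne'] using bound_continuous.tendsto y)

theorem finding_D1_general {ι : Type*} [Fintype ι] {a b lam α d C r : ℝ} (hab : a ≤ b)
    (hlam : lam < 1) {f f' : ι → ℝ → ℝ} (hf : ∀ j, IsIncreasingContraction (f j) (f' j) lam)
    (hf' : ∀ j, Continuous (f' j)) (hsurj : ∀ j, Surjective (f j))
    (hmaps : ∀ j, MapsTo (f j) (Icc a b) (Icc a b)) {p : ι → ℝ} (hp : ∀ j, 0 < p j)
    {μ : Measure ℝ} [IsProbabilityMeasure μ] (hμ : IsStationaryMeasure f p μ)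
    (hd : 0 < d) (hαd : α < d) (hF : IsFrostman μ C d) (hr : 0 ≤ r) :
    ∃ θ, 0 < θ ∧ ∃ ψ, IsPiecewiseConstant ψ ∧ (∀ x ∉ cthickening r (Icc a b), ψ x = 0) ∧
      (∀ x ∈ cthickening r (Icc a b), θ ≤ ψ x ∧ ψ x ≤ θ⁻¹) ∧
      ∀ x ∈ cthickening r (Icc a b), asymmetricDiffusion f p α ψ x < ψ x := by
  have μ_mem : ∀ᵐ x ∂μ, x ∈ cthickening r (Icc a b) :=
    (hμ.ae_mem_of_lipschitzWith (toNNReal_lt_one.2 hlam) (fun j => (hf j).lipschitzWith)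
      isClosed_Icc (nonempty_Icc.2 hab) hmaps).mono fun x hx => self_subset_cthickening _ hx
  rw [cthickening_Icc hab hr] at μ_mem ⊢
  obtain ⟨Ψ, hΨ, hΨ0, q, hq0, hq1, hq⟩ := exists_continuous_pos_asymmetricDiffusion_indicator_le
    hμ hF hf hlam (fun j => (hf' j).continuousOn) hsurj hp ordConnected_Icc isCompact_Icc μ_mem
    hd hαd
  obtain ⟨κ, hκ1, hκq⟩ := exists_between ((one_lt_div hq0).2 hq1)
  obtain ⟨ψ, hψ, hψ0, hψΨ⟩ :=
    exists_isPiecewiseConstant_between hΨ.continuousOn (fun x _ => hΨ0 x) hκ1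
  obtain ⟨θ, hθ, hθΨ⟩ := exists_pos_le_and_le_inv isCompact_Icc hΨ.continuousOn
    (fun x _ => hΨ0 x) (hΨ.const_mul κ).continuousOn fun x _ => mul_pos (one_pos.trans hκ1) (hΨ0 x)
  exact ⟨θ, hθ, ψ, hψ, hψ0,
    fun x hx => ⟨(hθΨ x hx).1.trans (hψΨ x hx).1, (hψΨ x hx).2.trans (hθΨ x hx).2⟩,
    fun x hx => asymmetricDiffusion_lt_of_between hf hsurj (fun j => (hp j).le)
      (one_pos.trans hκ1).le ((lt_div_iff₀ hq0).1 hκq) hψ0 hψΨ hx (hΨ0 x) (hq x)⟩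

/-- Theorem (existence of a test function for the Frostman dimension): for an iterated
function scheme of uniformly contracting `C^{1+ε}` orientation-preserving diffeomorphisms
preserving a compact interval `J = [a,b]`, if the stationary measure `μ` is `α'`-regular
for some `α' > α`, then there are `r > 0`, `θ > 0` and a piecewise constant test function
`ψ` supported on the closed `r`-neighbourhood `B_r(J)` and bounded between `θ` and `θ⁻¹`
there, which is strictly decreased on `B_r(J)` by the asymmetric diffusion operator
`D^{(1)}_{α,T}`. -/
theorem finding_D1 (n : ℕ) (a b : ℝ) (hab : a ≤ b)
    (ε lamMax : ℝ) (hε : 0 < ε) (hlam : lamMax < 1)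
    (f : Fin n → ℝ → ℝ) (f' : Fin n → ℝ → ℝ)
    (hbij : ∀ j, Function.Bijective (f j))
    (hderiv : ∀ j x, HasDerivAt (f j) (f' j x) x)
    (hpos : ∀ j x, 0 < f' j x)
    (hle : ∀ j x, f' j x ≤ lamMax)
    (Ch : ℝ) (hholder : ∀ j x y, |f' j x - f' j y| ≤ Ch * |x - y| ^ ε)
    (hmaps : ∀ j, ∀ x ∈ Set.Icc a b, f j x ∈ Set.Icc a b)
    (p : Fin n → ℝ) (hp : ∀ j, 0 < p j) (hpsum : ∑ j, p j = 1)
    (μ : Measure ℝ) [IsProbabilityMeasure μ]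
    (hμ : μ = ∑ j, ENNReal.ofReal (p j) • Measure.map (f j) μ)
    (α : ℝ) (hα : 0 < α)
    (hreg : ∃ α' : ℝ, α < α' ∧ ∃ C : ℝ, 0 < C ∧ ∀ (x ρ : ℝ), 0 < ρ →
      μ (Metric.closedBall x ρ) ≤ ENNReal.ofReal (C * ρ ^ α')) :
    ∃ r : ℝ, 0 < r ∧ ∃ θ : ℝ, 0 < θ ∧
    ∃ ψ : ℝ → ℝ,
      -- `ψ` is piecewise constant: a finite linear combination of indicators of intervals
      (∃ (m : ℕ) (coef : Fin m → ℝ) (I : Fin m → Set ℝ),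
          (∀ i, (I i).OrdConnected) ∧
          ψ = fun x => ∑ i, (I i).indicator (fun _ => coef i) x) ∧
      (∀ x ∉ Metric.cthickening r (Set.Icc a b), ψ x = 0) ∧
      (∀ x ∈ Metric.cthickening r (Set.Icc a b), θ ≤ ψ x ∧ ψ x ≤ θ⁻¹) ∧
      ∀ x ∈ Metric.cthickening r (Set.Icc a b),
        ∑ j, p j * (deriv (Function.invFun (f j)) x) ^ α * ψ (Function.invFun (f j) x)
          < ψ x := by
  obtain ⟨α', hαα', C, -, hF⟩ := hreg
  exact ⟨1, one_pos, finding_D1_general hab hlam (fun j => ⟨hderiv j, hpos j, hle j⟩)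
    (fun j => continuous_of_abs_sub_le_rpow hε (hholder j)) (fun j => (hbij j).surjective) hmaps
    hp hμ (hα.trans hαα') hαα' hF zero_le_one⟩
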